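/- arXiv:2310.13368 — 2 statements merged into one kernel-verified Lean document; each statement's English description precedes it below -/
import Mathlib

section
/- Every bilateral symmetric interaction (BSI) game is an exact potential game. Precisely: let S be a finite, linearly ordered set of players, for each i ∈ S let A_i be a nonempty strategy set, and suppose there are functions w_{ij} : A_i × A_j → ℝ for all pairs i ≠ j satisfying the symmetry condition w_{ij}(x, y) = w_{ji}(y, x) for all x ∈ A_i, y ∈ A_j, such that each player's utility has the form u_i(a) = Σ_{j ∈ S, j ≠ i} w_{ij}(a_i, a_j) for every strategy profile a ∈ Π_{i∈S} A_i. Then the function φ(a) = Σ_{i < j} w_{ij}(a_i, a_j) (sum over all ordered pairs i < j in S) is an exact potential for the game; that is, for every player i, every profile a, and every alternative strategy a'_i ∈ A_i, u_i(a'_i, a_{-i}) − u_i(a) = φ(a'_i, a_{-i}) − φ(a). -/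
/-- Every bilateral symmetric interaction (BSI) game is an exact potential game:
with players from a finite linearly ordered set, pairwise interaction functions
`w i j : A i → A j → ℝ` satisfying the symmetry `w i j x y = w j i y x` for `i ≠ j`,
and utilities `u i a = ∑_{j ≠ i} w i j (a i) (a j)`, the function
`φ a = ∑_{i < j} w i j (a i) (a j)` is an exact potential. -/
theorem bsi_game_is_exact_potential_game
    {ι : Type*} [Fintype ι] [LinearOrder ι]
    {A : ι → Type*} [∀ i, Nonempty (A i)]
    (w : ∀ i j : ι, A i → A j → ℝ)
    (hsym : ∀ i j : ι, i ≠ j → ∀ (x : A i) (y : A j), w i j x y = w j i y x)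
    (u : ∀ _ : ι, (∀ k, A k) → ℝ)
    (hu : ∀ (i : ι) (a : ∀ k, A k),
      u i a = ∑ j ∈ Finset.univ.erase i, w i j (a i) (a j)) :
    ∀ (i : ι) (a : ∀ k, A k) (a' : A i),
      u i (Function.update a i a') - u i a =
        (∑ p ∈ Finset.univ.filter (fun p : ι × ι => p.1 < p.2),
          w p.1 p.2 (Function.update a i a' p.1) (Function.update a i a' p.2)) -
        (∑ p ∈ Finset.univ.filter (fun p : ι × ι => p.1 < p.2),
          w p.1 p.2 (a p.1) (a p.2)) := by
  intro i a a'
  have key : ∀ b : (∀ k, A k),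
      (∑ p ∈ Finset.univ.filter (fun p : ι × ι => p.1 < p.2), w p.1 p.2 (b p.1) (b p.2)) =
        u i b + ∑ p ∈ (Finset.univ.filter (fun p : ι × ι => p.1 < p.2)).filter
          (fun p => ¬ (p.1 = i ∨ p.2 = i)), w p.1 p.2 (b p.1) (b p.2) := by
    intro b
    rw [← Finset.sum_filter_add_sum_filter_not
      (Finset.univ.filter (fun p : ι × ι => p.1 < p.2)) (fun p => p.1 = i ∨ p.2 = i), hu]
    congr 1
    symm
    refine Finset.sum_bij' (fun j _ => if i < j then (i, j) else (j, i))
      (fun p _ => if p.1 = i then p.2 else p.1) ?_ ?_ ?_ ?_ ?_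
    · intro j hj
      have hj : j ≠ i := by simpa using hj
      rcases lt_or_gt_of_ne hj with h | h
      · simp [h, h.not_gt]
      · simp [h]
    · rintro ⟨p, q⟩ hp
      simp only [Finset.mem_filter, Finset.mem_univ, true_and] at hp
      obtain ⟨h, rfl | rfl⟩ := hp
      · simp [h.ne']
      · simp [h.ne]
    · intro j hj
      have hj : j ≠ i := by simpa using hj
      by_cases h : i < j
      · simp [h]
      · simp [h, hj]
    · rintro ⟨p, q⟩ hp
      simp only [Finset.mem_filter, Finset.mem_univ, true_and] at hp
      obtain ⟨h, rfl | rfl⟩ := hp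
      · simp [h]
      · simp [h.ne, h.not_gt]
    · intro j hj
      have hj : j ≠ i := by simpa using hj
      by_cases h : i < j
      · rw [if_pos h]
      · rw [if_neg h]
        exact hsym i j hj.symm _ _
  rw [key, key a]
  have : ∀ p ∈ (Finset.univ.filter (fun p : ι × ι => p.1 < p.2)).filter
      (fun p => ¬ (p.1 = i ∨ p.2 = i)),
      w p.1 p.2 (Function.update a i a' p.1) (Function.update a i a' p.2)
        = w p.1 p.2 (a p.1) (a p.2) := by
    intro p hp
    have hp := (Finset.mem_filter.1 hp).2
    push Not at hp
    rw [Function.update_of_ne hp.1, Function.update_of_ne hp.2]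
  rw [Finset.sum_congr rfl this]
  ring
end

section
/- Every finite exact potential game possesses at least one pure Nash equilibrium. Precisely: let S be a finite nonempty set of players, let each strategy set A_i be finite and nonempty, let u_i : (Π_{i∈S} A_i) → ℝ be the utilities, and suppose the game admits an exact potential φ. Then there exists a strategy profile a* such that for every player i and every strategy a'_i ∈ A_i, u_i(a*) ≥ u_i(a'_i, a*_{-i}). -/
/-- Every finite exact potential game (finitely many players, finite nonempty
strategy sets, an exact potential `φ`) possesses a pure Nash equilibrium. -/
theorem finite_exact_potential_game_has_nash_equilibrium
    {ι : Type*} [Fintype ι] [Nonempty ι] [DecidableEq ι]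
    {A : ι → Type*} [∀ i, Fintype (A i)] [∀ i, Nonempty (A i)]
    (u : ∀ _ : ι, (∀ k, A k) → ℝ)
    (φ : (∀ k, A k) → ℝ)
    (hpot : ∀ (i : ι) (a : ∀ k, A k) (a' : A i),
      u i (Function.update a i a') - u i a = φ (Function.update a i a') - φ a) :
    ∃ astar : ∀ k, A k,
      ∀ (i : ι) (a' : A i), u i astar ≥ u i (Function.update astar i a') := by
  obtain ⟨x, hx⟩ := Finite.exists_max φ
  refine ⟨x, fun i a' => ?_⟩
  have h1 := hpot i x a'
  have h2 := hx (Function.update x i a')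
  linarith
end
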